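/- Let 0 < p < 1 and let α₁ ≥ β₁ > 0, α₂ ≥ β₂ > 0 with α₁² + β₁² = α₂² + β₂² = 1. If the concurrence of |χ(α₁)⟩ = α₁|00⟩ + β₁|11⟩ is at least that of |χ(α₂)⟩ (i.e., 2α₁β₁ ≥ 2α₂β₂), then after transmission through the amplitude damping channel C(ρ(χ(α₁), Λ_p)) ≥ C(ρ(χ(α₂), Λ_p)); if the pure-state inequality is strict, so is the mixed-state one. In particular C(ρ(Φ⁺, Λ_p)) > C(ρ(χ₀, Λ_p)) for |χ₀⟩ = (1/√(2−p))|00⟩ + √((1−p)/(2−p))|11⟩. -/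

import Mathlib

open Matrix Complex
open scoped Kronecker ComplexOrder

/-- Index type for two qubits: the product basis of ℂ² ⊗ ℂ². -/
abbrev Q2 := Fin 2 × Fin 2

/-- Kraus operator `M₀` of the amplitude damping channel. -/
noncomputable def M0 (p : ℝ) : Matrix (Fin 2) (Fin 2) ℂ :=
  !![1, 0; 0, (Real.sqrt (1 - p) : ℂ)]

/-- Kraus operator `M₁` of the amplitude damping channel. -/
noncomputable def M1 (p : ℝ) : Matrix (Fin 2) (Fin 2) ℂ :=
  !![0, (Real.sqrt p : ℂ); 0, 0]

/-- Outer product `|ψ⟩⟨ψ|` of a two-qubit vector. -/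
noncomputable def outer (ψ : Q2 → ℂ) : Matrix Q2 Q2 ℂ :=
  Matrix.of fun i j => ψ i * star (ψ j)

/-- The state `ρ(χ, Λ_p)` obtained by applying the amplitude damping channel
with parameter `p` to the second qubit: `Σᵢ (I ⊗ Mᵢ) ρ (I ⊗ Mᵢ)†`. -/
noncomputable def ampDamp (p : ℝ) (ρ : Matrix Q2 Q2 ℂ) : Matrix Q2 Q2 ℂ :=
  ((1 : Matrix (Fin 2) (Fin 2) ℂ) ⊗ₖ M0 p) * ρ * ((1 : Matrix (Fin 2) (Fin 2) ℂ) ⊗ₖ M0 p)ᴴ +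
  ((1 : Matrix (Fin 2) (Fin 2) ℂ) ⊗ₖ M1 p) * ρ * ((1 : Matrix (Fin 2) (Fin 2) ℂ) ⊗ₖ M1 p)ᴴ

/-- The pure state `|χ⟩ = a|00⟩ + b|11⟩`. -/
noncomputable def ketChi (a b : ℝ) : Q2 → ℂ :=
  fun ij => if ij = ((0 : Fin 2), (0 : Fin 2)) then (a : ℂ)
    else if ij = ((1 : Fin 2), (1 : Fin 2)) then (b : ℂ) else 0

/-- The maximally entangled state `|Φ⁺⟩ = (|00⟩ + |11⟩)/√2`. -/
noncomputable def phiPlus : Q2 → ℂ := ketChi (Real.sqrt 2)⁻¹ (Real.sqrt 2)⁻¹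

/-- The optimal transmitted state `|χ₀⟩ = (1/√(2−p))|00⟩ + √((1−p)/(2−p))|11⟩`. -/
noncomputable def ketChi0 (p : ℝ) : Q2 → ℂ :=
  ketChi (Real.sqrt (1 / (2 - p))) (Real.sqrt ((1 - p) / (2 - p)))

/-- Reduced density matrix on the first qubit (trace out the second qubit). -/
noncomputable def trSecond (ρ : Matrix Q2 Q2 ℂ) : Matrix (Fin 2) (Fin 2) ℂ :=
  Matrix.of fun i k => ∑ j : Fin 2, ρ (i, j) (k, j)

/-- Reduced density matrix on the second qubit (trace out the first qubit). -/
noncomputable def trFirst (ρ : Matrix Q2 Q2 ℂ) : Matrix (Fin 2) (Fin 2) ℂ :=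
  Matrix.of fun j l => ∑ i : Fin 2, ρ (i, j) (i, l)

/-- A unit vector `ψ ∈ ℂ²⊗ℂ²` is maximally entangled if both reduced density
matrices of `|ψ⟩⟨ψ|` equal `I/2`. -/
def MaxEnt (ψ : Q2 → ℂ) : Prop :=
  (∑ ij : Q2, Complex.normSq (ψ ij)) = 1 ∧
  trSecond (outer ψ) = (1 / 2 : ℂ) • (1 : Matrix (Fin 2) (Fin 2) ℂ) ∧
  trFirst (outer ψ) = (1 / 2 : ℂ) • (1 : Matrix (Fin 2) (Fin 2) ℂ)

/-- The real expectation value `⟨ψ|ρ|ψ⟩`. -/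
noncomputable def expectation (ψ : Q2 → ℂ) (ρ : Matrix Q2 Q2 ℂ) : ℝ :=
  (∑ i : Q2, ∑ j : Q2, star (ψ i) * ρ i j * ψ j).re

/-- Fidelity (fully entangled fraction): `F(ρ) = sup_Ψ ⟨Ψ|ρ|Ψ⟩` over maximally
entangled unit vectors `Ψ`. -/
noncomputable def Fid (ρ : Matrix Q2 Q2 ℂ) : ℝ :=
  sSup {x : ℝ | ∃ ψ : Q2 → ℂ, MaxEnt ψ ∧ x = expectation ψ ρ}

/-- Partial transposition on the second qubit: `(ρ^Γ)_{(i,j),(k,l)} = ρ_{(i,l),(k,j)}`. -/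
def ptrans (ρ : Matrix Q2 Q2 ℂ) : Matrix Q2 Q2 ℂ :=
  Matrix.of fun ij kl => ρ (ij.1, kl.2) (kl.1, ij.2)

/-- The Verstraete–Verschelde maximum achievable fidelity under trace-preserving LOCC,
as the value of the semidefinite program
`F*(ρ) = sup { 1/2 − Tr(X ρ^Γ) : X Hermitian, 0 ≤ X ≤ I, −I/2 ≤ X^Γ ≤ I/2 }`. -/
noncomputable def FStar (ρ : Matrix Q2 Q2 ℂ) : ℝ :=
  sSup {x : ℝ | ∃ X : Matrix Q2 Q2 ℂ,
    X.IsHermitian ∧ X.PosSemidef ∧ ((1 : Matrix Q2 Q2 ℂ) - X).PosSemidef ∧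
    (ptrans X + (1 / 2 : ℂ) • (1 : Matrix Q2 Q2 ℂ)).PosSemidef ∧
    ((1 / 2 : ℂ) • (1 : Matrix Q2 Q2 ℂ) - ptrans X).PosSemidef ∧
    x = 1 / 2 - ((X * ptrans ρ).trace).re}

/-- The Pauli matrix `σ_y`. -/
noncomputable def sigY : Matrix (Fin 2) (Fin 2) ℂ := !![0, -Complex.I; Complex.I, 0]

/-- The matrix `ρ (σ_y⊗σ_y) ρ̄ (σ_y⊗σ_y)` whose eigenvalues define the concurrence. -/
noncomputable def Rmat (ρ : Matrix Q2 Q2 ℂ) : Matrix Q2 Q2 ℂ :=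
  ρ * (sigY ⊗ₖ sigY) * ρ.map (starRingEnd ℂ) * (sigY ⊗ₖ sigY)

/-- `c` is the concurrence of `ρ`: `c = max(0, λ₁ − λ₂ − λ₃ − λ₄)` where
`λ₁ ≥ λ₂ ≥ λ₃ ≥ λ₄ ≥ 0` are the square roots of the eigenvalues (with multiplicity)
of `ρ (σ_y⊗σ_y) ρ̄ (σ_y⊗σ_y)`. -/
def IsConcurrence (ρ : Matrix Q2 Q2 ℂ) (c : ℝ) : Prop :=
  ∃ lam : Fin 4 → ℝ,
    (∀ i j : Fin 4, i ≤ j → lam j ≤ lam i) ∧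
    (∀ i : Fin 4, 0 ≤ lam i) ∧
    (Rmat ρ).charpoly = ∏ i : Fin 4, (Polynomial.X - Polynomial.C ((lam i : ℂ) ^ 2)) ∧
    c = max 0 (lam 0 - lam 1 - lam 2 - lam 3)

/-- `μ` is an eigenvalue of the matrix `A`. -/
def IsEigenvalue (A : Matrix Q2 Q2 ℂ) (μ : ℂ) : Prop :=
  ∃ v : Q2 → ℂ, v ≠ 0 ∧ A *ᵥ v = μ • v

/-!
A Kraus operator maps a pure state to a pure state, so the damped state is
`|φ⟩⟨φ| + |η⟩⟨η|` with `φ = α|00⟩ + β√(1-p)|11⟩` and `η = β√p|10⟩`. The spin flips `φ̃`, `η̃` of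
these vectors satisfy `⟨φ|η̃⟩ = ⟨η|φ̃⟩ = ⟨η|η̃⟩ = 0`, so `ρ(σ_y⊗σ_y)ρ̄(σ_y⊗σ_y)` reduces to the
rank-one matrix `⟨φ|φ̃⟩ |φ⟩⟨φ̃|`, whose only possible nonzero eigenvalue is `|⟨φ|φ̃⟩|²`. Hence the
concurrence is `|⟨φ|φ̃⟩| = √(1-p) · |2αβ|`: the channel multiplies the concurrence of every
`α|00⟩ + β|11⟩` by the same factor.
-/

lemma eq_of_antitone_of_map_univ_val_eq {α : Type*} [PartialOrder α] {n : ℕ} {f g : Fin n → α}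
    (hf : Antitone f) (hg : Antitone g)
    (h : Finset.univ.val.map f = Finset.univ.val.map g) : f = g := by
  rw [Fin.univ_val_map, Fin.univ_val_map, Multiset.coe_eq_coe] at h
  exact List.ofFn_injective
    (h.eq_of_pairwise' hf.sortedGE_ofFn.pairwise hg.sortedGE_ofFn.pairwise)

lemma abs_two_mul_mul_lt_one {a b : ℝ} (hab : a ^ 2 + b ^ 2 = 1) (hne : a ^ 2 ≠ b ^ 2) :
    |2 * a * b| < 1 := by
  have sq_eq : (2 * a * b) ^ 2 = 1 - (a ^ 2 - b ^ 2) ^ 2 := by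
    linear_combination (a ^ 2 + b ^ 2 + 1) * hab
  rw [← sq_lt_one_iff_abs_lt_one, sq_eq]
  exact sub_lt_self 1 (sq_pos_of_ne_zero (sub_ne_zero.mpr hne))

lemma IsConcurrence.unique {ρ : Matrix Q2 Q2 ℂ} {c c' : ℝ}
    (h : IsConcurrence ρ c) (h' : IsConcurrence ρ c') : c = c' := by
  obtain ⟨lam, anti, nonneg, charpoly_eq, rfl⟩ := h
  obtain ⟨lam', anti', nonneg', charpoly_eq', rfl⟩ := h'
  have roots_eq : Finset.univ.val.map (fun i => (lam i : ℂ) ^ 2) =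
      Finset.univ.val.map (fun i => (lam' i : ℂ) ^ 2) := by
    rw [← Polynomial.roots_multiset_prod_X_sub_C (Finset.univ.val.map fun i => (lam i : ℂ) ^ 2),
      ← Polynomial.roots_multiset_prod_X_sub_C (Finset.univ.val.map fun i => (lam' i : ℂ) ^ 2),
      Multiset.map_map, Multiset.map_map]
    exact congrArg Polynomial.roots (charpoly_eq.symm.trans charpoly_eq')
  have sqrt_re_sq {x : ℝ} (hx : 0 ≤ x) : √((x : ℂ) ^ 2).re = x := by
    rw [← ofReal_pow, ofReal_re, Real.sqrt_sq hx]
  have map_eq := congrArg (Multiset.map fun z : ℂ => √z.re) roots_eq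
  simp only [Multiset.map_map, Function.comp_def, sqrt_re_sq (nonneg _),
    sqrt_re_sq (nonneg' _)] at map_eq
  rw [eq_of_antitone_of_map_univ_val_eq anti anti' map_eq]

lemma isConcurrence_of_Rmat_eq_vecMulVec {ρ : Matrix Q2 Q2 ℂ} {u v : Q2 → ℂ} {c : ℝ}
    (hc : 0 ≤ c) (hR : Rmat ρ = vecMulVec u v) (huv : u ⬝ᵥ v = (c : ℂ) ^ 2) :
    IsConcurrence ρ c := by
  refine ⟨![c, 0, 0, 0], ?_, ?_, ?_, ?_⟩
  · intro i j hij
    fin_cases i <;> fin_cases j <;> simp_all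
  · intro i
    fin_cases i <;> simp [hc]
  · have prod_eq : ∏ i, (Polynomial.X - Polynomial.C (((![c, 0, 0, 0] : Fin 4 → ℝ) i : ℂ) ^ 2)) =
        (Polynomial.X - Polynomial.C ((c : ℂ) ^ 2)) * Polynomial.X ^ 3 := by
      simp [Fin.prod_univ_four, pow_succ, mul_assoc]
    rw [prod_eq, hR, charpoly_vecMulVec, huv, Polynomial.smul_eq_C_mul, sub_mul, ← pow_succ']
    rfl
  · simp [hc]

lemma mul_outer_mul_conjTranspose (A : Matrix Q2 Q2 ℂ) (ψ : Q2 → ℂ) :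
    A * outer ψ * Aᴴ = outer (A *ᵥ ψ) := by
  change A * vecMulVec ψ (star ψ) * Aᴴ = vecMulVec (A *ᵥ ψ) (star (A *ᵥ ψ))
  rw [mul_vecMulVec, vecMulVec_mul, star_mulVec]

lemma outer_mul_outer (φ ψ : Q2 → ℂ) :
    outer φ * outer ψ = (star φ ⬝ᵥ ψ) • vecMulVec φ (star ψ) := by
  change vecMulVec φ (star φ) * vecMulVec ψ (star ψ) = _
  rw [vecMulVec_mul_vecMulVec, vecMulVec_smul]

lemma map_conj_outer (ψ : Q2 → ℂ) : (outer ψ).map (starRingEnd ℂ) = outer (star ψ) := by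
  ext i j
  simp [outer]

/-- The spin flip `|ψ̃⟩ = (σ_y⊗σ_y)|ψ̄⟩` of a two-qubit vector; the concurrence of a pure state `ψ`
is `|⟨ψ|ψ̃⟩|`. -/
noncomputable def spinFlip (ψ : Q2 → ℂ) : Q2 → ℂ := (sigY ⊗ₖ sigY) *ᵥ star ψ

lemma conjTranspose_sigY : sigYᴴ = sigY := by
  ext i j
  fin_cases i <;> fin_cases j <;> simp [sigY]

lemma transpose_sigY : sigYᵀ = -sigY := by
  ext i j
  fin_cases i <;> fin_cases j <;> simp [sigY]

lemma transpose_sigY_kronecker_sigY : (sigY ⊗ₖ sigY)ᵀ = sigY ⊗ₖ sigY := by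
  ext ⟨i, j⟩ ⟨k, l⟩
  have antisymm (a b : Fin 2) : sigY a b = -sigY b a := congrFun₂ transpose_sigY b a
  simp [antisymm i k, antisymm j l]

lemma star_dotProduct_spinFlip_comm (φ ψ : Q2 → ℂ) :
    star φ ⬝ᵥ spinFlip ψ = star ψ ⬝ᵥ spinFlip φ := by
  rw [spinFlip, spinFlip, dotProduct_mulVec, ← mulVec_transpose, transpose_sigY_kronecker_sigY,
    dotProduct_comm]

lemma sigY_kronecker_mul_map_conj_outer_mul (ψ : Q2 → ℂ) :
    (sigY ⊗ₖ sigY) * (outer ψ).map (starRingEnd ℂ) * (sigY ⊗ₖ sigY) = outer (spinFlip ψ) := by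
  rw [map_conj_outer, spinFlip, ← mul_outer_mul_conjTranspose, conjTranspose_kronecker,
    conjTranspose_sigY]

lemma Rmat_outer_add_outer (φ η : Q2 → ℂ) :
    Rmat (outer φ + outer η) = (outer φ + outer η) * (outer (spinFlip φ) + outer (spinFlip η)) := by
  rw [← sigY_kronecker_mul_map_conj_outer_mul, ← sigY_kronecker_mul_map_conj_outer_mul,
    ← Matrix.add_mul, ← Matrix.mul_add, ← Matrix.map_add _ (map_add _), Rmat]
  simp only [Matrix.mul_assoc]

lemma isConcurrence_outer_add_outer {φ η : Q2 → ℂ} (hφη : star φ ⬝ᵥ spinFlip η = 0)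
    (hη : star η ⬝ᵥ spinFlip η = 0) :
    IsConcurrence (outer φ + outer η) ‖star φ ⬝ᵥ spinFlip φ‖ := by
  have hηφ : star η ⬝ᵥ spinFlip φ = 0 := star_dotProduct_spinFlip_comm φ η ▸ hφη
  have hR : Rmat (outer φ + outer η) =
      vecMulVec ((star φ ⬝ᵥ spinFlip φ) • φ) (star (spinFlip φ)) := by
    rw [Rmat_outer_add_outer, Matrix.add_mul, Matrix.mul_add, Matrix.mul_add]
    simp only [outer_mul_outer, hφη, hηφ, hη, zero_smul, add_zero, smul_vecMulVec]
  refine isConcurrence_of_Rmat_eq_vecMulVec (norm_nonneg _) hR ?_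
  have conj_overlap : φ ⬝ᵥ star (spinFlip φ) = star (star φ ⬝ᵥ spinFlip φ) := by
    rw [star_dotProduct φ, star_star, dotProduct_comm]
  rw [smul_dotProduct, conj_overlap, smul_eq_mul, star_def, mul_conj']

lemma one_kronecker_M0_mulVec_ketChi (p a b : ℝ) :
    ((1 : Matrix (Fin 2) (Fin 2) ℂ) ⊗ₖ M0 p) *ᵥ ketChi a b = ketChi a (b * √(1 - p)) := by
  ext ⟨i, j⟩
  fin_cases i <;> fin_cases j <;>
    simp [M0, ketChi, mulVec, dotProduct, Fintype.sum_prod_type, mul_comm]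

lemma one_kronecker_M1_mulVec_ketChi (p a b : ℝ) :
    ((1 : Matrix (Fin 2) (Fin 2) ℂ) ⊗ₖ M1 p) *ᵥ ketChi a b = Pi.single (1, 0) (b * √p : ℂ) := by
  ext ⟨i, j⟩
  fin_cases i <;> fin_cases j <;>
    simp [M1, ketChi, mulVec, dotProduct, Fintype.sum_prod_type, mul_comm]

lemma ampDamp_outer_ketChi (p a b : ℝ) :
    ampDamp p (outer (ketChi a b)) =
      outer (ketChi a (b * √(1 - p))) + outer (Pi.single (1, 0) (b * √p : ℂ)) := by
  rw [ampDamp, mul_outer_mul_conjTranspose, mul_outer_mul_conjTranspose,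
    one_kronecker_M0_mulVec_ketChi, one_kronecker_M1_mulVec_ketChi]

lemma star_ketChi (a b : ℝ) : star (ketChi a b) = ketChi a b := by
  ext i
  simp only [ketChi, Pi.star_apply]
  split_ifs <;> simp

lemma spinFlip_ketChi (a b : ℝ) : spinFlip (ketChi a b) = ketChi (-b) (-a) := by
  ext ⟨i, j⟩
  rw [spinFlip, star_ketChi]
  fin_cases i <;> fin_cases j <;>
    simp [sigY, ketChi, mulVec, dotProduct, Fintype.sum_prod_type]

lemma spinFlip_single_one_zero (z : ℂ) :
    spinFlip (Pi.single (1, 0) z) = Pi.single (0, 1) (star z) := by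
  ext ⟨i, j⟩
  rw [spinFlip, ← Pi.single_star, mulVec_single]
  fin_cases i <;> fin_cases j <;> simp [sigY]

lemma ketChi_dotProduct_ketChi (a b c d : ℝ) :
    ketChi a b ⬝ᵥ ketChi c d = (a * c + b * d : ℂ) := by
  simp [dotProduct, Fintype.sum_prod_type, ketChi]

lemma star_ketChi_dotProduct_spinFlip (a b : ℝ) :
    star (ketChi a b) ⬝ᵥ spinFlip (ketChi a b) = ((-(2 * a * b) : ℝ) : ℂ) := by
  rw [star_ketChi, spinFlip_ketChi, ketChi_dotProduct_ketChi]
  push_cast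
  ring

theorem isConcurrence_ampDamp_ketChi (p a b : ℝ) :
    IsConcurrence (ampDamp p (outer (ketChi a b))) (|2 * a * b| * √(1 - p)) := by
  have overlap_norm : ‖star (ketChi a (b * √(1 - p))) ⬝ᵥ spinFlip (ketChi a (b * √(1 - p)))‖ =
      |2 * a * b| * √(1 - p) := by
    rw [star_ketChi_dotProduct_spinFlip, norm_real, Real.norm_eq_abs, abs_neg, ← mul_assoc,
      abs_mul, abs_of_nonneg (Real.sqrt_nonneg _)]
  rw [ampDamp_outer_ketChi, ← overlap_norm]
  apply isConcurrence_outer_add_outer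
  · simp [spinFlip_single_one_zero, ketChi]
  · simp [spinFlip_single_one_zero]

theorem concurrence_ordering_preserved_general {p : ℝ} (hp : p < 1) {α₁ β₁ α₂ β₂ c₁ c₂ : ℝ}
    (h₁ : IsConcurrence (ampDamp p (outer (ketChi α₁ β₁))) c₁)
    (h₂ : IsConcurrence (ampDamp p (outer (ketChi α₂ β₂))) c₂) :
    (c₂ ≤ c₁ ↔ |2 * α₂ * β₂| ≤ |2 * α₁ * β₁|) ∧ (c₂ < c₁ ↔ |2 * α₂ * β₂| < |2 * α₁ * β₁|) := by
  have factor_pos : 0 < √(1 - p) := Real.sqrt_pos.mpr (sub_pos.mpr hp)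
  rw [h₁.unique (isConcurrence_ampDamp_ketChi p α₁ β₁),
    h₂.unique (isConcurrence_ampDamp_ketChi p α₂ β₂)]
  exact ⟨mul_le_mul_iff_left₀ factor_pos, mul_lt_mul_iff_left₀ factor_pos⟩

theorem lt_of_isConcurrence_ampDamp_phiPlus {p a b c₁ c₂ : ℝ} (hp : p < 1)
    (hab : a ^ 2 + b ^ 2 = 1) (hne : a ^ 2 ≠ b ^ 2)
    (h₁ : IsConcurrence (ampDamp p (outer phiPlus)) c₁)
    (h₂ : IsConcurrence (ampDamp p (outer (ketChi a b))) c₂) : c₂ < c₁ := by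
  have phiPlus_overlap : 2 * (√2)⁻¹ * (√2)⁻¹ = (1 : ℝ) := by
    rw [mul_assoc, ← mul_inv, Real.mul_self_sqrt zero_le_two, mul_inv_cancel₀ two_ne_zero]
  refine (concurrence_ordering_preserved_general hp h₁ h₂).2.mpr ?_
  rw [phiPlus_overlap, abs_one]
  exact abs_two_mul_mul_lt_one hab hne

theorem lt_of_isConcurrence_ampDamp_ketChi0 {p c₁ c₂ : ℝ} (hp0 : 0 < p) (hp1 : p < 1)
    (h₁ : IsConcurrence (ampDamp p (outer phiPlus)) c₁)
    (h₂ : IsConcurrence (ampDamp p (outer (ketChi0 p))) c₂) : c₂ < c₁ := by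
  have two_sub_pos : 0 < 2 - p := by linarith
  have sq_fst : √(1 / (2 - p)) ^ 2 = 1 / (2 - p) := Real.sq_sqrt (by positivity)
  have sq_snd : √((1 - p) / (2 - p)) ^ 2 = (1 - p) / (2 - p) :=
    Real.sq_sqrt (div_nonneg (sub_pos.mpr hp1).le two_sub_pos.le)
  refine lt_of_isConcurrence_ampDamp_phiPlus hp1 ?_ ?_ h₁ h₂
  · rw [sq_fst, sq_snd]
    field_simp
    ring
  · rw [sq_fst, sq_snd]
    exact (div_lt_div_of_pos_right (sub_lt_self 1 hp0) two_sub_pos).ne'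

/-- For `0 < p < 1`, the ordering of transmitted pure states under
concurrence is preserved by the amplitude damping channel: if `2α₁β₁ ≥ 2α₂β₂` then
`C(ρ(χ(α₁), Λ_p)) ≥ C(ρ(χ(α₂), Λ_p))`, strictly if the former is strict. In
particular `C(ρ(Φ⁺, Λ_p)) > C(ρ(χ₀, Λ_p))`. -/
theorem concurrence_ordering_preserved (p : ℝ) (hp0 : 0 < p) (hp1 : p < 1) :
    (∀ α₁ β₁ α₂ β₂ : ℝ, β₁ ≤ α₁ → 0 < β₁ → β₂ ≤ α₂ → 0 < β₂ →
      α₁ ^ 2 + β₁ ^ 2 = 1 → α₂ ^ 2 + β₂ ^ 2 = 1 →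
      ∀ c₁ c₂ : ℝ,
        IsConcurrence (ampDamp p (outer (ketChi α₁ β₁))) c₁ →
        IsConcurrence (ampDamp p (outer (ketChi α₂ β₂))) c₂ →
        (2 * α₂ * β₂ ≤ 2 * α₁ * β₁ → c₂ ≤ c₁) ∧
        (2 * α₂ * β₂ < 2 * α₁ * β₁ → c₂ < c₁)) ∧
    (∀ c₁ c₂ : ℝ,
      IsConcurrence (ampDamp p (outer phiPlus)) c₁ →
      IsConcurrence (ampDamp p (outer (ketChi0 p))) c₂ →
      c₂ < c₁) := by
  refine ⟨fun α₁ β₁ α₂ β₂ hβα₁ hβ₁ hβα₂ hβ₂ _ _ c₁ c₂ h₁ h₂ => ?_,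
    fun _ _ h₁ h₂ => lt_of_isConcurrence_ampDamp_ketChi0 hp0 hp1 h₁ h₂⟩
  have hα₁ := hβ₁.trans_le hβα₁
  have hα₂ := hβ₂.trans_le hβα₂
  have ordering := concurrence_ordering_preserved_general hp1 h₁ h₂
  rw [abs_of_pos (by positivity), abs_of_pos (by positivity)] at ordering
  exact ⟨ordering.1.mpr, ordering.2.mpr⟩
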